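/- Let k ≥ 3 be an integer and let x = (x_1, …, x_k) lie in the standard simplex Δ_k. (i) If x_i ≤ 6/11 for every i ≥ 3, then d_k(x) ≤ C_k(x_1, x_2). (ii) If x_i ≥ 6/11 for some i ≥ 3, then d_k(x) ≤ d_3(x_1, x_2, 1 − x_1 − x_2). -/

import Mathlib

/-- The cumulative distribution function `F(z) = min((11/6)z, 1)` of the ICUT scheme. -/
noncomputable def Fcdf (z : ℝ) : ℝ := min ((11 / 6) * z) 1

/-- The probability density `F′(z)`: `11/6` for `z < 6/11` and `0` for `z ≥ 6/11`. -/
noncomputable def Fpdf (z : ℝ) : ℝ := if z < 6 / 11 then 11 / 6 else 0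

/-- The density `d_k(x)` with which ICUT cuts an infinitesimal `1,2`-aligned segment at
`x = (x_1, …, x_k)`:
`d_k(x) = (1/k!) ∑_σ [ F′(x_1) ∏_{i : σ(i) < σ(1)} (1 − F(x_i))
                      + F′(x_2) ∏_{i : σ(i) < σ(2)} (1 − F(x_i)) ]`. -/
noncomputable def dDensity (k : ℕ) (hk : 2 ≤ k) (x : Fin k → ℝ) : ℝ :=
  ((Nat.factorial k : ℝ))⁻¹ *
    ∑ σ : Equiv.Perm (Fin k),
      (Fpdf (x ⟨0, by omega⟩) *
          ∏ i ∈ Finset.univ.filter (fun i => σ i < σ ⟨0, by omega⟩), (1 - Fcdf (x i)) +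
        Fpdf (x ⟨1, by omega⟩) *
          ∏ i ∈ Finset.univ.filter (fun i => σ i < σ ⟨1, by omega⟩), (1 - Fcdf (x i)))

/-- `C_k(x_1, x_2) = d_k(x_1, x_2, c, …, c)` where `c = (1 − x_1 − x_2)/(k − 2)`. -/
noncomputable def Cdensity (k : ℕ) (hk : 3 ≤ k) (x1 x2 : ℝ) : ℝ :=
  dDensity k (by omega)
    (fun i => if (i : ℕ) = 0 then x1 else if (i : ℕ) = 1 then x2
      else (1 - x1 - x2) / ((k : ℝ) - 2))

/-!
Replace the uniformly random order `σ` by i.i.d. uniform arrival times: given that `j` arrives at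
time `t`, each other `i` has arrived with probability `t` independently, so the average of
`∏_{σ i < σ j} (1 - y i)` over all orders is `∫₀¹ ∏_{i ≠ j} (1 - t y i) dt`. With `y i = F (x i)`
both bounds become pointwise in `t`, for the product over the coordinates `i ≥ 3`. In (i), `F` is
linear on these coordinates and AM-GM applies; in (ii), one factor is `1 - t` and the others are at
most `1`, while for `d_3` the product is the single factor `1 - t`.
-/

open Finset

lemma card_argmax_eq_one {ι α : Type*} [LinearOrder α] {f : ι → α} (hf : Function.Injective f)
    {s : Finset ι} (hs : s.Nonempty) : #{a ∈ s | ∀ i ∈ s, f i ≤ f a} = 1 := by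
  obtain ⟨m, hm, hmax⟩ := s.exists_max_image f hs
  refine card_eq_one.2 ⟨m, ?_⟩
  ext a
  simp only [mem_filter, mem_singleton]
  refine ⟨fun ⟨ha, h⟩ => hf ((hmax a ha).antisymm (h m hm)), ?_⟩
  rintro rfl
  exact ⟨hm, hmax⟩

lemma integral_prod_one_add_mul {ι : Type*} (s : Finset ι) (f : ι → ℝ) :
    ∫ t in (0 : ℝ)..1, ∏ i ∈ s, (1 + t * f i) = ∑ T ∈ s.powerset, (∏ i ∈ T, f i) / (#T + 1) := by
  simp only [prod_one_add, prod_mul_distrib, prod_const]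
  rw [intervalIntegral.integral_finsetSum fun T _ =>
    Continuous.intervalIntegrable (by fun_prop) _ _]
  refine sum_congr rfl fun T _ => ?_
  simp [intervalIntegral.integral_mul_const, integral_pow, div_eq_inv_mul]

section RandomOrder

variable {ι α : Type*} [Fintype ι] [DecidableEq ι] [Fintype α] [LinearOrder α]

lemma card_equiv_forall_le_eq {s : Finset ι} {a b : ι} (ha : a ∈ s) (hb : b ∈ s) :
    #{σ : ι ≃ α | ∀ i ∈ s, σ i ≤ σ a} = #{σ : ι ≃ α | ∀ i ∈ s, σ i ≤ σ b} := by
  have swap_mem (i : ι) (hi : i ∈ s) : Equiv.swap a b i ∈ s := by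
    rw [Equiv.swap_apply_def]
    split_ifs <;> assumption
  refine card_equiv (Equiv.equivCongr (Equiv.swap a b) (Equiv.refl α)) fun σ => ?_
  simp only [mem_filter_univ, Equiv.equivCongr_apply_apply, Equiv.symm_swap, Equiv.refl_apply,
    Equiv.swap_apply_right]
  exact ⟨fun h i hi => h _ (swap_mem i hi),
    fun h i hi => by simpa using h _ (swap_mem i hi)⟩

lemma card_mul_card_equiv_forall_le {s : Finset ι} {a : ι} (ha : a ∈ s) :
    #s * #{σ : ι ≃ α | ∀ i ∈ s, σ i ≤ σ a} = Fintype.card (ι ≃ α) := by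
  calc #s * #{σ : ι ≃ α | ∀ i ∈ s, σ i ≤ σ a}
      = ∑ b ∈ s, #{σ : ι ≃ α | ∀ i ∈ s, σ i ≤ σ b} := by
        rw [sum_congr rfl fun b hb => card_equiv_forall_le_eq hb ha, sum_const, smul_eq_mul]
    _ = ∑ σ : ι ≃ α, #{b ∈ s | ∀ i ∈ s, σ i ≤ σ b} :=
        sum_card_bipartiteAbove_eq_sum_card_bipartiteBelow
          fun (b : ι) (σ : ι ≃ α) => ∀ i ∈ s, σ i ≤ σ b
    _ = ∑ _σ : ι ≃ α, 1 :=
        sum_congr rfl fun σ _ => by convert card_argmax_eq_one σ.injective ⟨a, ha⟩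
    _ = Fintype.card (ι ≃ α) := by rw [sum_const, smul_eq_mul, mul_one, card_univ]

lemma card_add_one_mul_card_equiv_forall_lt {T : Finset ι} {j : ι} (hj : j ∉ T) :
    (#T + 1) * #{σ : ι ≃ α | ∀ i ∈ T, σ i < σ j} = Fintype.card (ι ≃ α) := by
  rw [← card_mul_card_equiv_forall_le (mem_insert_self j T), card_insert_of_notMem hj]
  congr 2
  ext σ
  simp only [mem_filter_univ, forall_mem_insert, le_refl, true_and]
  refine forall₂_congr fun i hi => ⟨le_of_lt, fun h => h.lt_of_ne fun hij => hj ?_⟩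
  rwa [← σ.injective hij]

lemma sum_equiv_prod_one_add {R : Type*} [Field R] [CharZero R] (j : ι) (f : ι → R) :
    ∑ σ : ι ≃ α, ∏ i with σ i < σ j, (1 + f i) =
      Fintype.card (ι ≃ α) * ∑ T ∈ ({j}ᶜ : Finset ι).powerset, (∏ i ∈ T, f i) / (#T + 1) := by
  calc ∑ σ : ι ≃ α, ∏ i with σ i < σ j, (1 + f i)
      = ∑ σ : ι ≃ α, ∑ T ∈ ({i | σ i < σ j} : Finset ι).powerset, ∏ i ∈ T, f i := by
        simp only [prod_one_add]
    _ = ∑ T ∈ ({j}ᶜ : Finset ι).powerset,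
          ∑ σ : ι ≃ α with ∀ i ∈ T, σ i < σ j, ∏ i ∈ T, f i := by
        refine sum_comm' fun σ T => ?_
        simp only [mem_univ, true_and, mem_powerset, mem_filter_univ, subset_iff, mem_compl,
          mem_singleton]
        exact ⟨fun h => ⟨h, fun i hi hij => (h hi).ne (congrArg σ hij)⟩, And.left⟩
    _ = Fintype.card (ι ≃ α) *
          ∑ T ∈ ({j}ᶜ : Finset ι).powerset, (∏ i ∈ T, f i) / (#T + 1) := by
        rw [mul_sum]
        refine sum_congr rfl fun T hT => ?_
        have hjT : j ∉ T := by simpa using hT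
        rw [sum_const, nsmul_eq_mul, ← card_add_one_mul_card_equiv_forall_lt (α := α) hjT]
        push_cast
        field_simp

lemma sum_equiv_prod_one_sub (j : ι) (y : ι → ℝ) :
    ∑ σ : ι ≃ α, ∏ i with σ i < σ j, (1 - y i) =
      Fintype.card (ι ≃ α) * ∫ t in (0 : ℝ)..1, ∏ i ∈ {j}ᶜ, (1 - t * y i) := by
  simp only [sub_eq_add_neg, ← mul_neg]
  rw [sum_equiv_prod_one_add, integral_prod_one_add_mul]

end RandomOrder

lemma prod_le_arith_mean_pow_card {ι : Type*} {s : Finset ι} (hs : s.Nonempty) {z : ι → ℝ}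
    (hz : ∀ i ∈ s, 0 ≤ z i) : ∏ i ∈ s, z i ≤ ((∑ i ∈ s, z i) / #s) ^ #s := by
  have amgm : (∏ i ∈ s, z i) ^ (#s : ℝ)⁻¹ ≤ (∑ i ∈ s, z i) / #s := by
    simpa using Real.geom_mean_le_arith_mean s (fun _ => 1) z (by simp) (by simpa using hs) hz
  have hprod := prod_nonneg hz
  calc ∏ i ∈ s, z i = ((∏ i ∈ s, z i) ^ (#s : ℝ)⁻¹) ^ #s :=
        (Real.rpow_inv_natCast_pow hprod hs.card_ne_zero).symm
    _ ≤ ((∑ i ∈ s, z i) / #s) ^ #s := by gcongr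

lemma Fpdf_nonneg (z : ℝ) : 0 ≤ Fpdf z := by
  unfold Fpdf
  split_ifs <;> norm_num

lemma Fcdf_le_one (z : ℝ) : Fcdf z ≤ 1 := min_le_right _ _

lemma Fcdf_nonneg {z : ℝ} (hz : 0 ≤ z) : 0 ≤ Fcdf z := le_min (by positivity) zero_le_one

lemma Fcdf_of_le {z : ℝ} (hz : z ≤ 6 / 11) : Fcdf z = 11 / 6 * z := min_eq_left (by linarith)

lemma Fcdf_of_ge {z : ℝ} (hz : 6 / 11 ≤ z) : Fcdf z = 1 := min_eq_right (by linarith)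

lemma one_sub_mul_Fcdf_nonneg {t : ℝ} (ht : t ∈ Set.Icc (0 : ℝ) 1) (z : ℝ) :
    0 ≤ 1 - t * Fcdf z :=
  sub_nonneg.2 ((mul_le_of_le_one_right ht.1 (Fcdf_le_one z)).trans ht.2)

lemma one_sub_mul_Fcdf_le_one {t z : ℝ} (ht : 0 ≤ t) (hz : 0 ≤ z) : 1 - t * Fcdf z ≤ 1 :=
  sub_le_self 1 (mul_nonneg ht (Fcdf_nonneg hz))

lemma Fcdf_sum_div_card {ι : Type*} {s : Finset ι} {z : ι → ℝ} (hz : ∀ i ∈ s, z i ≤ 6 / 11) :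
    Fcdf ((∑ i ∈ s, z i) / #s) = (∑ i ∈ s, Fcdf (z i)) / #s := by
  have hmean : (∑ i ∈ s, z i) / #s ≤ 6 / 11 :=
    div_le_of_le_mul₀ (by positivity) (by norm_num) <| by
      simpa [mul_comm] using sum_le_card_nsmul s z (6 / 11) hz
  rw [Fcdf_of_le hmean, sum_congr rfl fun i hi => Fcdf_of_le (hz i hi), ← mul_sum, mul_div_assoc]

lemma prod_one_sub_mul_Fcdf_le_pow {ι : Type*} {s : Finset ι} (hs : s.Nonempty) {z : ι → ℝ}
    (hz : ∀ i ∈ s, z i ≤ 6 / 11) {t : ℝ} (ht : t ∈ Set.Icc (0 : ℝ) 1) :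
    ∏ i ∈ s, (1 - t * Fcdf (z i)) ≤ (1 - t * Fcdf ((∑ i ∈ s, z i) / #s)) ^ #s := by
  have hcard : (#s : ℝ) ≠ 0 := by exact_mod_cast hs.card_ne_zero
  have hmean : (∑ i ∈ s, (1 - t * Fcdf (z i))) / #s = 1 - t * Fcdf ((∑ i ∈ s, z i) / #s) := by
    rw [Fcdf_sum_div_card hz, sum_sub_distrib, ← mul_sum, sum_const, nsmul_one]
    field_simp
  exact hmean ▸ prod_le_arith_mean_pow_card hs fun i _ => one_sub_mul_Fcdf_nonneg ht (z i)

lemma prod_one_sub_mul_Fcdf_le_one_sub {ι : Type*} {s : Finset ι} {z : ι → ℝ}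
    (hz : ∀ i ∈ s, 0 ≤ z i) {j : ι} (hj : j ∈ s) (hzj : 6 / 11 ≤ z j) {t : ℝ}
    (ht : t ∈ Set.Icc (0 : ℝ) 1) : ∏ i ∈ s, (1 - t * Fcdf (z i)) ≤ 1 - t := by
  classical
  have hrest : ∏ i ∈ s.erase j, (1 - t * Fcdf (z i)) ≤ 1 :=
    prod_le_one (fun i _ => one_sub_mul_Fcdf_nonneg ht (z i))
      fun i hi => one_sub_mul_Fcdf_le_one ht.1 (hz i (mem_of_mem_erase hi))
  rw [← mul_prod_erase s _ hj, Fcdf_of_ge hzj, mul_one]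
  exact mul_le_of_le_one_right (sub_nonneg.2 ht.2) hrest

lemma dDensity_eq_integral {n : ℕ} (x : Fin (n + 2) → ℝ) :
    dDensity (n + 2) (by omega) x =
      Fpdf (x 0) * (∫ t in (0 : ℝ)..1,
        (1 - t * Fcdf (x 1)) * ∏ i : Fin n, (1 - t * Fcdf (x i.succ.succ))) +
      Fpdf (x 1) * ∫ t in (0 : ℝ)..1,
        (1 - t * Fcdf (x 0)) * ∏ i : Fin n, (1 - t * Fcdf (x i.succ.succ)) := by
  have average (j : Fin (n + 2)) :
      ((n + 2).factorial : ℝ)⁻¹ * ∑ σ : Equiv.Perm (Fin (n + 2)),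
        ∏ i with σ i < σ j, (1 - Fcdf (x i)) =
      ∫ t in (0 : ℝ)..1, ∏ i, (1 - t * Fcdf (x (j.succAbove i))) := by
    rw [sum_equiv_prod_one_sub j fun i => Fcdf (x i), Fintype.card_perm, Fintype.card_fin,
      inv_mul_cancel_left₀ (by positivity)]
    simp only [← Fin.image_succAbove_univ, prod_image j.succAbove_right_injective.injOn]
  have h0 := average 0
  have h1 := average 1
  simp only [Fin.prod_univ_succ, Fin.succAbove_zero, Fin.one_succAbove_zero, Fin.one_succAbove_succ,
    Fin.succ_zero_eq_one] at h0 h1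
  rw [← h0, ← h1, dDensity, sum_add_distrib, ← mul_sum, ← mul_sum, mul_add, mul_left_comm,
    mul_left_comm _ (Fpdf (x ⟨1, _⟩))]
  rfl

lemma dDensity_le_dDensity {m n : ℕ} {x : Fin (m + 2) → ℝ} {y : Fin (n + 2) → ℝ}
    (h0 : x 0 = y 0) (h1 : x 1 = y 1)
    (h : ∀ t ∈ Set.Icc (0 : ℝ) 1, ∏ i : Fin m, (1 - t * Fcdf (x i.succ.succ)) ≤
      ∏ i : Fin n, (1 - t * Fcdf (y i.succ.succ))) :
    dDensity (m + 2) (by omega) x ≤ dDensity (n + 2) (by omega) y := by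
  have integral_le (z : ℝ) :
      ∫ t in (0 : ℝ)..1, (1 - t * Fcdf z) * ∏ i : Fin m, (1 - t * Fcdf (x i.succ.succ)) ≤
      ∫ t in (0 : ℝ)..1, (1 - t * Fcdf z) * ∏ i : Fin n, (1 - t * Fcdf (y i.succ.succ)) :=
    intervalIntegral.integral_mono_on zero_le_one
      (Continuous.intervalIntegrable (by fun_prop) _ _)
      (Continuous.intervalIntegrable (by fun_prop) _ _)
      fun t ht => mul_le_mul_of_nonneg_left (h t ht) (one_sub_mul_Fcdf_nonneg ht z)
  rw [dDensity_eq_integral, dDensity_eq_integral, ← h0, ← h1]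
  exact add_le_add (mul_le_mul_of_nonneg_left (integral_le _) (Fpdf_nonneg _))
    (mul_le_mul_of_nonneg_left (integral_le _) (Fpdf_nonneg _))

lemma sum_succ_succ_eq_sub {M : Type*} [AddCommGroup M] {n : ℕ} (f : Fin (n + 2) → M) :
    ∑ i : Fin n, f i.succ.succ = ∑ i, f i - f 0 - f 1 := by
  rw [Fin.sum_univ_succ f, Fin.sum_univ_succ, Fin.succ_zero_eq_one]
  abel

theorem dDensity_le_Cdensity {n : ℕ} {x : Fin (n + 3) → ℝ} (hsum : ∑ i, x i = 1)
    (h : ∀ i : Fin (n + 1), x i.succ.succ ≤ 6 / 11) :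
    dDensity (n + 3) (by omega) x ≤ Cdensity (n + 3) (by omega) (x 0) (x 1) := by
  refine dDensity_le_dDensity (by simp) (by simp) fun t ht => ?_
  have hle := prod_one_sub_mul_Fcdf_le_pow univ_nonempty (fun i _ => h i) ht
  have hcard : (#(univ : Finset (Fin (n + 1))) : ℝ) = (n + 3 : ℕ) - 2 := by
    rw [card_univ, Fintype.card_fin]
    push_cast
    ring
  rw [sum_succ_succ_eq_sub, hsum, hcard, ← prod_const] at hle
  simpa using hle

theorem dDensity_le_dDensity_three {n : ℕ} {x : Fin (n + 2) → ℝ} (hsum : ∑ i, x i = 1)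
    (hnonneg : ∀ i : Fin n, 0 ≤ x i.succ.succ) {j : Fin n} (hj : 6 / 11 ≤ x j.succ.succ) :
    dDensity (n + 2) (by omega) x ≤ dDensity 3 (Nat.le_succ 2) ![x 0, x 1, 1 - x 0 - x 1] := by
  refine dDensity_le_dDensity rfl rfl fun t ht => ?_
  have hrest : 6 / 11 ≤ 1 - x 0 - x 1 :=
    calc 6 / 11 ≤ x j.succ.succ := hj
      _ ≤ ∑ i : Fin n, x i.succ.succ :=
        single_le_sum (f := fun i : Fin n => x i.succ.succ) (fun i _ => hnonneg i) (mem_univ j)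
      _ = 1 - x 0 - x 1 := by rw [sum_succ_succ_eq_sub, hsum]
  have hle := prod_one_sub_mul_Fcdf_le_one_sub (fun i _ => hnonneg i) (mem_univ j) hj ht
  simpa [Fcdf_of_ge hrest] using hle

theorem dDensity_le_Cdensity_or_three_general {n : ℕ} {x : Fin (n + 3) → ℝ}
    (hsum : ∑ i, x i = 1) :
    ((∀ i : Fin (n + 3), 2 ≤ (i : ℕ) → x i ≤ 6 / 11) →
        dDensity (n + 3) (by omega) x ≤ Cdensity (n + 3) (by omega) (x 0) (x 1)) ∧
    ((∀ i : Fin (n + 3), 2 ≤ (i : ℕ) → 0 ≤ x i) →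
        (∃ i : Fin (n + 3), 2 ≤ (i : ℕ) ∧ 6 / 11 ≤ x i) →
        dDensity (n + 3) (by omega) x ≤
          dDensity 3 (Nat.le_succ 2) ![x 0, x 1, 1 - x 0 - x 1]) := by
  refine ⟨fun h => dDensity_le_Cdensity hsum fun i => h _ (by simp), ?_⟩
  rintro hnonneg ⟨i, hi, hxi⟩
  obtain ⟨j, rfl⟩ : ∃ j : Fin (n + 1), j.succ.succ = i := ⟨i.subNat 2 hi, Fin.addNat_subNat hi⟩
  exact dDensity_le_dDensity_three hsum (fun i => hnonneg _ (by simp)) hxi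

/-- (i) if `x_i ≤ 6/11` for every coordinate `i ≥ 3` then
`d_k(x) ≤ C_k(x_1, x_2)`; (ii) if `x_i ≥ 6/11` for some `i ≥ 3` then
`d_k(x) ≤ d_3(x_1, x_2, 1 − x_1 − x_2)`. -/
theorem dDensity_le_Cdensity_or_three (k : ℕ) (hk : 3 ≤ k) (x : Fin k → ℝ)
    (hx : x ∈ stdSimplex ℝ (Fin k)) :
    ((∀ i : Fin k, 2 ≤ (i : ℕ) → x i ≤ 6 / 11) →
        dDensity k (by omega) x ≤ Cdensity k hk (x ⟨0, by omega⟩) (x ⟨1, by omega⟩)) ∧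
    ((∃ i : Fin k, 2 ≤ (i : ℕ) ∧ 6 / 11 ≤ x i) →
        dDensity k (by omega) x ≤
          dDensity 3 (by omega)
            ![x ⟨0, by omega⟩, x ⟨1, by omega⟩, 1 - x ⟨0, by omega⟩ - x ⟨1, by omega⟩]) := by
  obtain ⟨n, rfl⟩ := Nat.exists_eq_add_of_le' hk
  exact (dDensity_le_Cdensity_or_three_general hx.2).imp_right fun h => h fun i _ => hx.1 i
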